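/- There exist constants c > 0 and C ≥ 1 such that for every integer n ≥ 2 there is an instance (J,M) of P||C_max with at most C·n jobs, at most C·n machines, processing times p_j ∈ {1,2}, and opt(J,M) = 2, with the following property: every polytope P̄ ⊆ P(J,M) such that (i) P̄ contains the point (x^σ, 2) for every optimal schedule σ (i.e., every schedule of makespan 2), and (ii) every extreme point of P̄ is of the form (x^σ, T) for some schedule σ and some integer T with T ≥ makespan(σ), satisfies xc(P̄) ≥ 2^{c·n/log n}. -/

import Mathlib

open Finset

noncomputable section

/-- An extended formulation of size `k` (number of inequalities) for `P ⊆ ℝ^ι`. -/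
def IsEF {ι : Type} [Fintype ι] (P : Set (ι → ℝ)) (k : ℕ) : Prop :=
  ∃ (e l : ℕ) (A : Matrix (Fin k) (Fin e) ℝ) (b : Fin k → ℝ)
    (C : Matrix (Fin l) (Fin e) ℝ) (d : Fin l → ℝ)
    (π : (Fin e → ℝ) →ᵃ[ℝ] (ι → ℝ)),
    π '' {y | (∀ r, A.mulVec y r ≤ b r) ∧ (∀ r, C.mulVec y r = d r)} = P

/-- The extension complexity of `P`. -/
noncomputable def xc {ι : Type} [Fintype ι] (P : Set (ι → ℝ)) : ℕ :=
  sInf {k | IsEF P k}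

/-- The load of machine `i` under schedule `σ`. -/
def load {n m : ℕ} (p : Fin n → ℕ) (σ : Fin n → Fin m) (i : Fin m) : ℕ :=
  ∑ j, if σ j = i then p j else 0

/-- The makespan of a schedule: the maximum machine load. -/
def makespan {n m : ℕ} (p : Fin n → ℕ) (σ : Fin n → Fin m) : ℕ :=
  Finset.univ.sup (load p σ)

/-- The optimal makespan of the instance. -/
noncomputable def optMakespan (n m : ℕ) (p : Fin n → ℕ) : ℕ :=
  sInf {t | ∃ σ : Fin n → Fin m, makespan p σ = t}

/-- The 0/1 assignment vector of a schedule, indexed by machine-job pairs. -/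
def assignVec {n m : ℕ} (σ : Fin n → Fin m) : Fin m × Fin n → ℝ :=
  fun q => if σ q.2 = q.1 then 1 else 0

/-- `Q(J,M)`: the convex hull of the assignment vectors of all schedules. -/
def Qpoly (n m : ℕ) : Set (Fin m × Fin n → ℝ) :=
  convexHull ℝ {x | ∃ σ : Fin n → Fin m, x = assignVec σ}

/-- `P(J,M)`: the convex hull of all points `(x^σ, T)` where `σ` is a schedule and the
natural number `T` upper-bounds every machine load; the `T`-coordinate is the `none`
coordinate of the ambient space `ℝ^(Option (M × J))`. -/
def Ppoly (n m : ℕ) (p : Fin n → ℕ) : Set (Option (Fin m × Fin n) → ℝ) :=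
  convexHull ℝ {z | ∃ (σ : Fin n → Fin m) (t : ℕ), (∀ i, load p σ i ≤ t) ∧
    z = fun q => Option.elim q (t : ℝ) (fun ij => assignVec σ ij)}

/-- Farkas' lemma for finitely many linear functionals on a real vector space. -/
theorem farkas_finset {E ι : Type*} [AddCommGroup E] [Module ℝ E] (s : Finset ι) :
    ∀ (a : ι → E →ₗ[ℝ] ℝ) (b : E →ₗ[ℝ] ℝ),
      (∀ x, (∀ i ∈ s, a i x ≤ 0) → b x ≤ 0) →
      ∃ c : ι → ℝ, (∀ i, 0 ≤ c i) ∧ b = ∑ i ∈ s, c i • a i := by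
  classical
  induction s using Finset.induction_on with
  | empty =>
    intro a b h
    refine ⟨fun _ => 0, fun _ => le_rfl, ?_⟩
    ext x
    have h1 := h x (by simp)
    have h2 := h (-x) (by simp)
    simp only [map_neg] at h2
    simp only [Finset.sum_empty, LinearMap.zero_apply]
    linarith
  | insert j s hj ih =>
    intro a b h
    by_cases hb : ∀ x, (∀ i ∈ s, a i x ≤ 0) → b x ≤ 0
    · obtain ⟨c, hc, hbc⟩ := ih a b hb
      refine ⟨Function.update c j 0, ?_, ?_⟩
      · intro i
        by_cases hi : i = j
        · subst hi; simp
        · simp [Function.update_of_ne hi, hc i]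
      · rw [Finset.sum_insert hj, Function.update_self, zero_smul, zero_add, hbc]
        refine Finset.sum_congr rfl fun i hi => ?_
        rw [Function.update_of_ne (ne_of_mem_of_not_mem hi hj)]
    · push Not at hb
      obtain ⟨z, hz, hbz⟩ := hb
      have hjz : 0 < a j z := by
        by_contra hcon
        refine absurd (h z fun i hi => ?_) (not_le.mpr hbz)
        rcases Finset.mem_insert.mp hi with rfl | hi
        · exact not_lt.mp hcon
        · exact hz i hi
      obtain ⟨c, hc, hbc⟩ := ih (fun i => a i - (a i z / a j z) • a j)
        (b - (b z / a j z) • a j) (by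
          intro x hx
          have key := h (x - (a j x / a j z) • z) (by
            intro i hi
            rcases Finset.mem_insert.mp hi with rfl | hi
            · simp [hjz.ne']
            · have := hx i hi
              simp only [LinearMap.sub_apply, LinearMap.smul_apply, smul_eq_mul] at this
              simp only [map_sub, map_smul, smul_eq_mul]
              calc _ = a i x - a i z / a j z * a j x := by ring
                _ ≤ 0 := this)
          simp only [map_sub, map_smul, smul_eq_mul] at key
          simp only [LinearMap.sub_apply, LinearMap.smul_apply, smul_eq_mul]
          calc _ = b x - a j x / a j z * b z := by ring
            _ ≤ 0 := key)
      refine ⟨Function.update c j ((b z - ∑ i ∈ s, c i * a i z) / a j z), ?_, ?_⟩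
      · intro i
        by_cases hi : i = j
        · subst hi
          rw [Function.update_self]
          refine div_nonneg ?_ hjz.le
          have : ∑ i ∈ s, c i * a i z ≤ 0 :=
            Finset.sum_nonpos fun i hi => mul_nonpos_of_nonneg_of_nonpos (hc i) (hz i hi)
          linarith
        · simp [Function.update_of_ne hi, hc i]
      · rw [Finset.sum_insert hj, Function.update_self]
        have hs : ∑ i ∈ s, Function.update c j ((b z - ∑ i ∈ s, c i * a i z) / a j z) i • a i
            = ∑ i ∈ s, c i • a i :=
          Finset.sum_congr rfl fun i hi => by
            rw [Function.update_of_ne (ne_of_mem_of_not_mem hi hj)]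
        rw [hs]
        ext x
        have := LinearMap.congr_fun hbc x
        simp only [LinearMap.sub_apply, LinearMap.smul_apply, smul_eq_mul,
          LinearMap.sum_apply, mul_sub, Finset.sum_sub_distrib] at this
        have e : ∑ i ∈ s, c i * (a i z / a j z * a j x)
            = (∑ i ∈ s, c i * a i z) / a j z * a j x := by
          rw [Finset.sum_div, Finset.sum_mul]
          exact Finset.sum_congr rfl fun i _ => by ring
        rw [e] at this
        simp only [LinearMap.add_apply, LinearMap.smul_apply, smul_eq_mul, LinearMap.sum_apply]
        rw [sub_div, sub_mul]
        linarith

/-- The affine form of Farkas' lemma: an affine function that is nonnegative on a nonempty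
polyhedron is, on this polyhedron, a nonnegative combination of the slacks and of `1`. -/
theorem affine_farkas {E κ μ : Type*} [AddCommGroup E] [Module ℝ E] [Fintype κ] [Fintype μ]
    (A : κ → E →ₗ[ℝ] ℝ) (b : κ → ℝ) (C : μ → E →ₗ[ℝ] ℝ) (d : μ → ℝ)
    (h : E →ₗ[ℝ] ℝ) (h₀ : ℝ)
    (hne : ∃ y, (∀ r, A r y ≤ b r) ∧ ∀ r, C r y = d r)
    (hnonneg : ∀ y, (∀ r, A r y ≤ b r) → (∀ r, C r y = d r) → 0 ≤ h y + h₀) :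
    ∃ c : Option κ → ℝ, (∀ r, 0 ≤ c r) ∧
      ∀ y, (∀ r, C r y = d r) → h y + h₀ = c none + ∑ r, c (some r) * (b r - A r y) := by
  classical
  obtain ⟨y₀, hA₀, hC₀⟩ := hne
  let P : E × ℝ →ₗ[ℝ] E := LinearMap.fst ℝ E ℝ
  let Q : E × ℝ →ₗ[ℝ] ℝ := LinearMap.snd ℝ E ℝ
  let a : Option κ ⊕ (μ ⊕ μ) → (E × ℝ →ₗ[ℝ] ℝ) := Sum.elim
    (fun r => r.elim (-Q) (fun r => (A r).comp P - b r • Q))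
    (Sum.elim (fun r => (C r).comp P - d r • Q) (fun r => -((C r).comp P - d r • Q)))
  obtain ⟨c, hc, hEq⟩ := farkas_finset Finset.univ a (-(h.comp P + h₀ • Q)) (by
    rintro ⟨y, t⟩ hy
    have ht : 0 ≤ t := by simpa [a, Q] using hy (Sum.inl none) (by simp)
    have hAy : ∀ r, A r y ≤ b r * t := fun r => by
      simpa [a, P, Q] using hy (Sum.inl (some r)) (by simp)
    have hCy : ∀ r, C r y = d r * t := fun r => by
      have h1 : C r y ≤ d r * t := by simpa [a, P, Q] using hy (Sum.inr (Sum.inl r)) (by simp)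
      have h2 : d r * t ≤ C r y := by simpa [a, P, Q] using hy (Sum.inr (Sum.inr r)) (by simp)
      exact le_antisymm h1 h2
    suffices 0 ≤ h y + h₀ * t by
      simp only [P, Q, LinearMap.neg_apply, LinearMap.add_apply, LinearMap.comp_apply,
        LinearMap.smul_apply, LinearMap.fst_apply, LinearMap.snd_apply, smul_eq_mul]
      linarith
    rcases ht.lt_or_eq with ht | rfl
    · have := hnonneg (t⁻¹ • y)
        (fun r => by
          rw [map_smul, smul_eq_mul, inv_mul_le_iff₀ ht, mul_comm]; exact hAy r)
        (fun r => by
          rw [map_smul, smul_eq_mul, hCy r]; field_simp)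
      rw [map_smul, smul_eq_mul] at this
      have h3 := mul_nonneg ht.le this
      rw [mul_add, mul_inv_cancel_left₀ ht.ne'] at h3
      linarith
    · simp only [mul_zero, add_zero] at hAy hCy ⊢
      by_contra hneg
      push Not at hneg
      have key : ∀ s : ℝ, 0 ≤ s → 0 ≤ h y₀ + s * h y + h₀ := fun s hs => by
        have := hnonneg (y₀ + s • y)
          (fun r => by
            rw [map_add, map_smul, smul_eq_mul]
            nlinarith [hA₀ r, hAy r])
          (fun r => by rw [map_add, map_smul, smul_eq_mul, hCy r, hC₀ r]; ring)
        simpa using this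
      have h0 := hnonneg y₀ hA₀ hC₀
      have := key ((h y₀ + h₀ + 1) / (-h y)) (div_nonneg (by linarith) (by linarith))
      have e : (h y₀ + h₀ + 1) / (-h y) * h y = -(h y₀ + h₀ + 1) := by
        rw [div_neg, neg_mul, div_mul_cancel₀ _ hneg.ne]
      linarith)
  refine ⟨fun r => c (Sum.inl r), fun r => hc _, fun y hy => ?_⟩
  have := LinearMap.congr_fun hEq (y, 1)
  simp only [a, P, Q, Fintype.sum_sum_type, Fintype.sum_option, Sum.elim_inl, Sum.elim_inr,
    Option.elim_none, Option.elim_some, LinearMap.add_apply, LinearMap.neg_apply,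
    LinearMap.smul_apply, LinearMap.sum_apply, LinearMap.sub_apply, LinearMap.comp_apply,
    LinearMap.fst_apply, LinearMap.snd_apply, smul_eq_mul, mul_one, hy, sub_self, neg_zero,
    mul_zero, Finset.sum_const_zero, add_zero] at this
  have e : ∑ r, c (Sum.inl (some r)) * (b r - A r y)
      = -∑ r, c (Sum.inl (some r)) * (A r y - b r) := by
    rw [← Finset.sum_neg_distrib]
    exact Finset.sum_congr rfl fun r _ => by ring
  rw [e]
  linarith

/-- A polytope has an extended formulation. -/
theorem exists_isEF_convexHull {ι : Type} [Fintype ι] {S : Set (ι → ℝ)} (hS : S.Finite) :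
    ∃ k, IsEF (convexHull ℝ S) k := by
  classical
  obtain ⟨s, rfl⟩ := hS.exists_finset_coe
  let v : Fin s.card → ι → ℝ := fun i => (s.equivFin.symm i : ι → ℝ)
  have hv : Set.range v = (s : Set (ι → ℝ)) := by
    ext x
    constructor
    · rintro ⟨i, rfl⟩
      exact (s.equivFin.symm i).2
    · intro hx
      exact ⟨s.equivFin ⟨x, hx⟩, by simp [v]⟩
  refine ⟨s.card, s.card, 1, -1, 0, Matrix.of fun _ _ => 1, fun _ => 1,
    (Fintype.linearCombination ℝ v).toAffineMap, ?_⟩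
  have hv' : Set.range v = Fintype.linearCombination ℝ v ''
      Set.range (fun i : Fin s.card => (Pi.single i 1 : Fin s.card → ℝ)) := by
    rw [← Set.range_comp]
    congr 1
    ext i q
    simp
  rw [← hv, hv', ← LinearMap.image_convexHull, convexHull_rangle_single_eq_stdSimplex]
  simp only [Pi.neg_apply, Matrix.neg_mulVec, Matrix.one_mulVec]
  simp [stdSimplex, Matrix.mulVec, dotProduct]

/-- An extended formulation of size `k` gives a nonnegative factorization with `k + 1` terms of
every matrix of slacks. -/
theorem IsEF.exists_nonneg_factorization {ι : Type} [Fintype ι] {P : Set (ι → ℝ)} {k : ℕ}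
    (hP : IsEF P k) {α β : Type*} (h : α → (ι → ℝ) →ᵃ[ℝ] ℝ) (s : β → ι → ℝ)
    (hs : ∀ j, s j ∈ P) (hh : ∀ i, ∀ z ∈ P, 0 ≤ h i z) :
    ∃ (f : Option (Fin k) → α → ℝ) (g : Option (Fin k) → β → ℝ),
      (∀ r i, 0 ≤ f r i) ∧ (∀ r j, 0 ≤ g r j) ∧ ∀ i j, h i (s j) = ∑ r, f r i * g r j := by
  obtain ⟨e, l, A, b, C, d, π, rfl⟩ := hP
  choose y hy hys using hs
  rcases isEmpty_or_nonempty β with hβ | ⟨⟨j₀⟩⟩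
  · exact ⟨0, 0, fun _ _ => le_rfl, fun _ _ => le_rfl, fun _ j => isEmptyElim j⟩
  have main : ∀ i, ∃ c : Option (Fin k) → ℝ, (∀ r, 0 ≤ c r) ∧
      ∀ x, (∀ r, C.mulVec x r = d r) →
        h i (π x) = c none + ∑ r, c (some r) * (b r - A.mulVec x r) := fun i => by
    have key : ∀ x, ((h i).comp π).linear x + (h i).comp π 0 = h i (π x) := fun x => by
      have := ((h i).comp π).decomp
      exact (congrFun this x).symm
    obtain ⟨c, hc, hEq⟩ := affine_farkas (fun r => (LinearMap.proj r).comp A.mulVecLin) b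
      (fun r => (LinearMap.proj r).comp C.mulVecLin) d ((h i).comp π).linear ((h i).comp π 0)
      ⟨y j₀, (hy j₀).1, (hy j₀).2⟩ (fun x h1 h2 => by
        rw [key]
        exact hh i _ ⟨x, ⟨h1, h2⟩, rfl⟩)
    refine ⟨c, hc, fun x hx => ?_⟩
    rw [← key]
    exact hEq x hx
  choose c hc hEq using main
  refine ⟨fun r i => c i r, fun r j => r.elim 1 fun r => b r - A.mulVec (y j) r,
    fun r i => hc i r, ?_, fun i j => ?_⟩
  · rintro (_ | r) j
    · exact zero_le_one
    · exact sub_nonneg.mpr ((hy j).1 r)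
  · rw [← hys j, hEq i (y j) (hy j).2, Fintype.sum_option]
    simp

/-- The `±1` value of a bit. -/
def bitSign (b : Bool) : ℝ := if b then -1 else 1

/-- A first-moment (level-one) bound: a function on the cube with values in `[0, α]` has a small
total bias, unless its mean is exponentially small. -/
theorem sum_abs_bias_le {I : Type*} [Fintype I] [DecidableEq I] (φ : (I → Bool) → ℝ) {α η : ℝ}
    (hη : 0 ≤ η) (h0 : ∀ x, 0 ≤ φ x) (hα : ∀ x, φ x ≤ α) :
    ∑ i, |∑ x, bitSign (x i) * φ x| ≤
      η * Fintype.card I * ∑ x, φ x +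
        α * Fintype.card I * 2 ^ Fintype.card I * Real.exp (-(η ^ 2 * Fintype.card I / 2)) := by
  set n : ℝ := (Fintype.card I : ℝ) with hn
  let ε : I → ℝ := fun i => if 0 ≤ ∑ x, bitSign (x i) * φ x then 1 else -1
  have hε : ∀ i, ε i = 1 ∨ ε i = -1 := fun i => by
    by_cases h : 0 ≤ ∑ x, bitSign (x i) * φ x <;> simp [ε, h]
  let Z : (I → Bool) → ℝ := fun x => ∑ i, ε i * bitSign (x i)
  have hZn : ∀ x, Z x ≤ n := fun x => by
    have : Z x ≤ ∑ _i : I, (1 : ℝ) := Finset.sum_le_sum fun i _ => by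
      rcases hε i with h | h <;> cases hx : x i <;> simp [h, bitSign]
    simpa [hn] using this
  have hsum : ∑ i, |∑ x, bitSign (x i) * φ x| = ∑ x, φ x * Z x := by
    have : ∀ i, |∑ x, bitSign (x i) * φ x| = ∑ x, φ x * (ε i * bitSign (x i)) := fun i => by
      have e : ∑ x, φ x * (ε i * bitSign (x i)) = ε i * ∑ x, bitSign (x i) * φ x := by
        rw [Finset.mul_sum]
        exact Finset.sum_congr rfl fun x _ => by ring
      rw [e]
      by_cases h : 0 ≤ ∑ x, bitSign (x i) * φ x
      · simp [ε, h, abs_of_nonneg h]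
      · simp [ε, h, abs_of_neg (not_le.mp h)]
    simp_rw [this]
    rw [Finset.sum_comm]
    simp_rw [Z, Finset.mul_sum]
  have hn0 : 0 ≤ n := Nat.cast_nonneg _
  have hpt : ∀ x, φ x * Z x ≤
      η * n * φ x + α * n * (Real.exp (-(η ^ 2 * n)) * Real.exp (η * Z x)) := by
    intro x
    have hα0 : 0 ≤ α := (h0 x).trans (hα x)
    rw [← Real.exp_add]
    rcases le_total (Z x) (η * n) with h | h
    · have h1 := mul_le_mul_of_nonneg_left h (h0 x)
      have h2 : 0 ≤ α * n * Real.exp (-(η ^ 2 * n) + η * Z x) := by positivity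
      linarith
    · have h1 : 1 ≤ Real.exp (-(η ^ 2 * n) + η * Z x) := by
        rw [Real.one_le_exp_iff]
        nlinarith
      have h2 : φ x * Z x ≤ α * n :=
        (mul_le_mul_of_nonneg_left (hZn x) (h0 x)).trans (mul_le_mul_of_nonneg_right (hα x) hn0)
      have h3 : α * n ≤ α * n * Real.exp (-(η ^ 2 * n) + η * Z x) :=
        le_mul_of_one_le_right (by positivity) h1
      have h4 : 0 ≤ η * n * φ x := mul_nonneg (by positivity) (h0 x)
      linarith
  have hexp : ∑ x : I → Bool, Real.exp (η * Z x) ≤ 2 ^ Fintype.card I * Real.exp (η ^ 2 * n / 2) := by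
    have e : ∀ x, Real.exp (η * Z x) = ∏ i, Real.exp (η * (ε i * bitSign (x i))) := fun x => by
      rw [← Real.exp_sum, Finset.mul_sum]
    simp_rw [e]
    rw [← Fintype.prod_sum (fun i (b : Bool) => Real.exp (η * (ε i * bitSign b)))]
    have hb : ∀ i, ∑ b : Bool, Real.exp (η * (ε i * bitSign b)) ≤ 2 * Real.exp (η ^ 2 / 2) := by
      intro i
      have := Real.cosh_le_exp_half_sq η
      rw [Real.cosh_eq] at this
      rcases hε i with h | h <;> simp [h, bitSign] <;> linarith
    calc _ ≤ ∏ _i : I, 2 * Real.exp (η ^ 2 / 2) :=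
          Finset.prod_le_prod (fun i _ => Finset.sum_nonneg fun b _ => (Real.exp_pos _).le)
            fun i _ => hb i
      _ = _ := by
          rw [Finset.prod_const, mul_pow, ← Real.exp_nat_mul, Finset.card_univ]
          congr 2
          rw [hn]; ring
  rw [hsum]
  have hα0 : 0 ≤ α := (h0 fun _ => true).trans (hα _)
  calc ∑ x, φ x * Z x
      ≤ ∑ x, (η * n * φ x + α * n * (Real.exp (-(η ^ 2 * n)) * Real.exp (η * Z x))) :=
        Finset.sum_le_sum fun x _ => hpt x
    _ = η * n * ∑ x, φ x + α * n * Real.exp (-(η ^ 2 * n)) * ∑ x, Real.exp (η * Z x) := by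
        rw [Finset.sum_add_distrib, Finset.mul_sum, Finset.mul_sum]
        simp only [mul_assoc]
    _ ≤ η * n * ∑ x, φ x + α * n * Real.exp (-(η ^ 2 * n)) *
          (2 ^ Fintype.card I * Real.exp (η ^ 2 * n / 2)) := by gcongr
    _ = _ := by
        have : Real.exp (-(η ^ 2 * n / 2)) = Real.exp (-(η ^ 2 * n)) * Real.exp (η ^ 2 * n / 2) := by
          rw [← Real.exp_add]; congr 1; ring
        rw [this]; ring

/-- The part of a sum over the cube `{0,1}^(1+m)` where the distinguished bit equals `b`. -/
def bitSum {m : ℕ} (φ : (Option (Fin m) → Bool) → ℝ) (b : Bool) : ℝ :=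
  ∑ x, if x none = b then φ x else 0

theorem bitSum_nonneg {m : ℕ} {φ : (Option (Fin m) → Bool) → ℝ} (h : ∀ x, 0 ≤ φ x) (b : Bool) :
    0 ≤ bitSum φ b :=
  Finset.sum_nonneg fun x _ => by split_ifs <;> simp [h x]

theorem bitSum_false_add_true {m : ℕ} (φ : (Option (Fin m) → Bool) → ℝ) :
    bitSum φ false + bitSum φ true = ∑ x, φ x := by
  rw [bitSum, bitSum, ← Finset.sum_add_distrib]
  refine Finset.sum_congr rfl fun x _ => ?_
  cases x none <;> simp

theorem bitSum_false_sub_true {m : ℕ} (φ : (Option (Fin m) → Bool) → ℝ) :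
    bitSum φ false - bitSum φ true = ∑ x, bitSign (x none) * φ x := by
  rw [bitSum, bitSum, ← Finset.sum_sub_distrib]
  refine Finset.sum_congr rfl fun x _ => ?_
  cases x none <;> simp [bitSign]

theorem bitSum_le {m : ℕ} {φ : (Option (Fin m) → Bool) → ℝ} {α : ℝ} (h0 : ∀ x, 0 ≤ φ x)
    (hα : ∀ x, φ x ≤ α) (b : Bool) : bitSum φ b ≤ α * 2 ^ (m + 1) := by
  calc bitSum φ b ≤ ∑ _x : Option (Fin m) → Bool, α := Finset.sum_le_sum fun x _ => by
        split_ifs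
        · exact hα x
        · exact (h0 x).trans (hα x)
    _ = _ := by simp [mul_comm]

theorem bitSum_congr {m : ℕ} {φ ψ : (Option (Fin m) → Bool) → ℝ} {b : Bool}
    (h : ∀ x, x none = b → φ x = ψ x) : bitSum φ b = bitSum ψ b :=
  Finset.sum_congr rfl fun x _ => by
    split_ifs with hx
    · exact h x hx
    · rfl

theorem bitSum_one {m : ℕ} (b : Bool) :
    bitSum (fun _ : Option (Fin m) → Bool => (1 : ℝ)) b = 2 ^ m := by
  have hsub : bitSum (fun _ : Option (Fin m) → Bool => (1 : ℝ)) false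
      = bitSum (fun _ : Option (Fin m) → Bool => (1 : ℝ)) true := by
    refine Fintype.sum_equiv
      ⟨fun x i => !x i, fun x i => !x i, fun x => by simp, fun x => by simp⟩ _ _ fun x => ?_
    simp
  have hadd := bitSum_false_add_true (fun _ : Option (Fin m) → Bool => (1 : ℝ))
  simp only [Finset.sum_const, Finset.card_univ, Fintype.card_fun, Fintype.card_option,
    Fintype.card_bool, Fintype.card_fin, nsmul_eq_mul, mul_one, pow_succ] at hadd
  push_cast at hadd
  cases b <;> linarith

/-- If the distinguished bit is exchangeable with all other bits under symmetries that preserve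
the weight `H`, then its weighted bias is small. -/
theorem sum_abs_bitSum_sub_mul_le {G : Type*} [Fintype G] {m : ℕ}
    (Φ : G → (Option (Fin m) → Bool) → ℝ) (H : G → ℝ) (σ : Option (Fin m) → Equiv.Perm G)
    {α γ η : ℝ} (hη : 0 ≤ η) (h0 : ∀ τ x, 0 ≤ Φ τ x) (hα : ∀ τ x, Φ τ x ≤ α)
    (hH0 : ∀ τ, 0 ≤ H τ) (hHγ : ∀ τ, H τ ≤ γ)
    (hΦσ : ∀ i τ x, Φ (σ i τ) x = Φ τ (x ∘ Equiv.swap none i))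
    (hHσ : ∀ i τ, H (σ i τ) = H τ) :
    (1 - η) * ∑ τ, |bitSum (Φ τ) false - bitSum (Φ τ) true| * H τ ≤
      2 * η * ∑ τ, bitSum (Φ τ) false * H τ +
        Fintype.card G * (α * γ * 2 ^ (m + 1) * Real.exp (-(η ^ 2 * (m + 1) / 2))) := by
  classical
  rcases isEmpty_or_nonempty G with hG | ⟨⟨τ₀⟩⟩
  · simp
  have hα0 : 0 ≤ α := (h0 τ₀ fun _ => true).trans (hα _ _)
  set Δ := ∑ τ, |bitSum (Φ τ) false - bitSum (Φ τ) true| * H τ with hΔ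
  have hcard : (Fintype.card (Option (Fin m)) : ℝ) = m + 1 := by simp
  have hm : (0 : ℝ) < m + 1 := by positivity
  have h1 : (m + 1) * Δ = ∑ τ, (∑ i, |∑ x, bitSign (x i) * Φ τ x|) * H τ := by
    have : ∀ i, Δ = ∑ τ, |∑ x, bitSign (x i) * Φ τ x| * H τ := fun i => by
      rw [hΔ, ← Equiv.sum_comp (σ i)]
      refine Finset.sum_congr rfl fun τ _ => ?_
      rw [hHσ, bitSum_false_sub_true]
      congr 2
      refine Fintype.sum_equiv (Equiv.arrowCongr (Equiv.swap none i) (Equiv.refl Bool)) _ _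
        fun x => ?_
      rw [hΦσ]
      simp [Equiv.arrowCongr, Function.comp_def]
    rw [← hcard, ← nsmul_eq_mul, ← Finset.card_univ, ← Finset.sum_const,
      Finset.sum_congr rfl fun i _ => this i, Finset.sum_comm]
    simp_rw [Finset.sum_mul]
  set err := α * 2 ^ (m + 1) * Real.exp (-(η ^ 2 * (m + 1) / 2)) with herr
  have herr0 : 0 ≤ err := by positivity
  have h2 : ∀ τ, (∑ i, |∑ x, bitSign (x i) * Φ τ x|) * H τ ≤
      (m + 1) * (2 * η * (bitSum (Φ τ) false * H τ)
        + η * (|bitSum (Φ τ) false - bitSum (Φ τ) true| * H τ) + err * γ) := fun τ => by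
    have hb := sum_abs_bias_le (Φ τ) hη (h0 τ) (hα τ)
    rw [← bitSum_false_add_true, hcard, Fintype.card_option, Fintype.card_fin] at hb
    have habs : bitSum (Φ τ) true ≤
        bitSum (Φ τ) false + |bitSum (Φ τ) false - bitSum (Φ τ) true| := by
      linarith [neg_abs_le (bitSum (Φ τ) false - bitSum (Φ τ) true)]
    have hb' : ∑ i, |∑ x, bitSign (x i) * Φ τ x| ≤
        (m + 1) * (2 * η * bitSum (Φ τ) false
          + η * |bitSum (Φ τ) false - bitSum (Φ τ) true| + err) := by
      refine hb.trans ?_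
      have := mul_le_mul_of_nonneg_left habs (mul_nonneg hη hm.le)
      rw [herr]
      linarith
    calc _ ≤ (m + 1) * (2 * η * bitSum (Φ τ) false
          + η * |bitSum (Φ τ) false - bitSum (Φ τ) true| + err) * H τ :=
          mul_le_mul_of_nonneg_right hb' (hH0 τ)
      _ = (m + 1) * (2 * η * (bitSum (Φ τ) false * H τ)
        + η * (|bitSum (Φ τ) false - bitSum (Φ τ) true| * H τ) + err * H τ) := by ring
      _ ≤ _ := by
        have := mul_le_mul_of_nonneg_left (hHγ τ) herr0
        gcongr
  have h3 : (m + 1) * Δ ≤ (m + 1) * (2 * η * ∑ τ, bitSum (Φ τ) false * H τ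
      + η * Δ + Fintype.card G * (err * γ)) := by
    rw [h1]
    refine (Finset.sum_le_sum fun τ _ => h2 τ).trans (le_of_eq ?_)
    rw [← Finset.mul_sum, Finset.sum_add_distrib, Finset.sum_add_distrib, ← Finset.mul_sum,
      ← Finset.mul_sum, ← hΔ]
    simp
  have h4 := le_of_mul_le_mul_left h3 hm
  have h5 : err * γ = α * γ * 2 ^ (m + 1) * Real.exp (-(η ^ 2 * (m + 1) / 2)) := by
    rw [herr]; ring
  rw [← h5]
  linarith

/-- The labels of the blocks: one distinguished block, `m` blocks for the vertex set and `m`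
blocks for the matching. -/
abbrev Block (m : ℕ) : Type := Option (Fin m ⊕ Fin m)

/-- The vertices: three special ones, and two for every block. -/
abbrev Vtx (m : ℕ) : Type := Fin 3 ⊕ Block m × Bool

/-- The vertices of a vertex set `X` that are unmatched by the matching `π`, or matched to a vertex
outside `X`. The matching is encoded as an involution, whose fixed points are unmatched. -/
def defects {V : Type*} [Fintype V] [DecidableEq V] (X : V → Bool) (π : V → V) : Finset V :=
  {v | X v = true ∧ (π v = v ∨ X (π v) = false)}

theorem mem_defects {V : Type*} [Fintype V] [DecidableEq V] {X : V → Bool} {π : V → V} {v : V} :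
    v ∈ defects X π ↔ X v = true ∧ (π v = v ∨ X (π v) = false) := by
  simp [defects]

/-- The relabelling of a map along a permutation. -/
def relabel {V : Type*} (τ : Equiv.Perm V) (π : V → V) : V → V := fun v => τ.symm (π (τ v))

theorem relabel_mul {V : Type*} (σ τ : Equiv.Perm V) (π : V → V) :
    relabel (σ * τ) π = relabel τ (relabel σ π) := rfl

theorem involutive_relabel {V : Type*} (τ : Equiv.Perm V) {π : V → V}
    (h : Function.Involutive π) : Function.Involutive (relabel τ π) := fun v => by
  simp [relabel, h (τ v)]

theorem card_defects_relabel {V : Type*} [Fintype V] [DecidableEq V] (τ : Equiv.Perm V)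
    (X : V → Bool) (π : V → V) :
    (defects (X ∘ τ) (relabel τ π)).card = (defects X π).card := by
  refine Finset.card_bij (fun v _ => τ v) ?_ (fun v _ w _ h => τ.injective h) ?_
  · intro v hv
    simpa [defects, relabel, Equiv.symm_apply_eq] using hv
  · intro v hv
    exact ⟨τ.symm v, by simpa [defects, relabel] using hv, by simp⟩

theorem card_filter_comp_perm {V : Type*} [Fintype V] [DecidableEq V] (τ : Equiv.Perm V)
    (X : V → Bool) :
    (Finset.univ.filter fun v => (X ∘ τ) v = true).card
      = (Finset.univ.filter fun v => X v = true).card := by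
  refine Finset.card_bij (fun v _ => τ v) ?_ (fun v _ w _ h => τ.injective h) ?_
  · intro v hv
    simpa using hv
  · intro v hv
    exact ⟨τ.symm v, by simpa using hv, by simp⟩

/-- The special vertices together with a union of blocks. -/
def blockSet {m : ℕ} (D : Block m → Bool) : Vtx m → Bool :=
  Sum.elim (fun _ => true) fun q => D q.1

/-- The matching that matches the two vertices of each block in `D`. -/
def blockMatching {m : ℕ} (D : Block m → Bool) : Vtx m → Vtx m :=
  Sum.elim Sum.inl fun q => Sum.inr (q.1, if D q.1 then !q.2 else q.2)

theorem involutive_blockMatching {m : ℕ} (D : Block m → Bool) :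
    Function.Involutive (blockMatching D) := by
  rintro (i | ⟨q, b⟩)
  · rfl
  · by_cases h : D q = true <;> simp [blockMatching, h]

theorem odd_card_blockSet {m : ℕ} (D : Block m → Bool) :
    Odd (Finset.univ.filter fun v => blockSet D v = true).card := by
  have h1 : ∀ i : Fin 3, (if blockSet D (Sum.inl i) = true then 1 else 0) = 1 := fun _ => rfl
  have h2 : ∀ q b, (if blockSet D (Sum.inr (q, b)) = true then 1 else 0)
      = if D q = true then 1 else 0 := fun _ _ => rfl
  rw [Finset.card_filter, Fintype.sum_sum_type, Fintype.sum_prod_type]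
  simp only [h1, h2, Finset.sum_const, Finset.card_univ, Fintype.card_bool, Fintype.card_fin,
    smul_eq_mul]
  rw [← Finset.mul_sum]
  exact ⟨1 + ∑ q : Block m, if D q = true then 1 else 0, by ring⟩

/-- The blocks contained in the vertex set. -/
def setBlocks {m : ℕ} (x : Option (Fin m) → Bool) : Block m → Bool
  | none => x none
  | some (Sum.inl i) => x (some i)
  | some (Sum.inr _) => false

/-- The blocks whose vertices are matched. -/
def matchedBlocks {m : ℕ} (y : Option (Fin m) → Bool) : Block m → Bool
  | none => !y none
  | some (Sum.inl _) => true
  | some (Sum.inr i) => !y (some i)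

/-- The permutation of the vertices induced by a permutation of the blocks. -/
def blockPerm {m : ℕ} (s : Equiv.Perm (Block m)) : Equiv.Perm (Vtx m) :=
  Equiv.sumCongr (Equiv.refl _) (Equiv.prodCongr s (Equiv.refl _))

theorem blockSet_comp_blockPerm {m : ℕ} (s : Equiv.Perm (Block m)) (D : Block m → Bool) :
    blockSet D ∘ blockPerm s = blockSet (D ∘ s) := by
  ext (i | q) <;> rfl

theorem relabel_blockPerm {m : ℕ} (s : Equiv.Perm (Block m)) (D : Block m → Bool) :
    relabel (blockPerm s) (blockMatching D) = blockMatching (D ∘ s) := by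
  ext (i | q) : 1
  · rfl
  · simp [relabel, blockPerm, blockMatching]

theorem setBlocks_comp_swap_inl {m : ℕ} (x : Option (Fin m) → Bool) (i : Option (Fin m)) :
    setBlocks x ∘ Equiv.swap none (i.map Sum.inl) = setBlocks (x ∘ Equiv.swap none i) := by
  rcases i with _ | i
  · simp
  ext (_ | j | j) : 1
  · simp [setBlocks]
  · by_cases h : j = i
    · subst h; simp [setBlocks]
    · have h1 : Equiv.swap none (some (Sum.inl i)) (some (Sum.inl j))
          = (some (Sum.inl j) : Block m) :=
        Equiv.swap_apply_of_ne_of_ne (by simp) (by simpa using h)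
      have h2 : Equiv.swap none (some i) (some j) = some j :=
        Equiv.swap_apply_of_ne_of_ne (by simp) (by simpa using h)
      simp [setBlocks, h1, h2]
  · have h1 : Equiv.swap none (some (Sum.inl i)) (some (Sum.inr j))
          = (some (Sum.inr j) : Block m) :=
        Equiv.swap_apply_of_ne_of_ne (by simp) (by simp)
    simp [setBlocks, h1]

theorem matchedBlocks_comp_swap_inr {m : ℕ} (y : Option (Fin m) → Bool) (i : Option (Fin m)) :
    matchedBlocks y ∘ Equiv.swap none (i.map Sum.inr) = matchedBlocks (y ∘ Equiv.swap none i) := by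
  rcases i with _ | i
  · simp
  ext (_ | j | j) : 1
  · simp [matchedBlocks]
  · have h1 : Equiv.swap none (some (Sum.inr i)) (some (Sum.inl j))
          = (some (Sum.inl j) : Block m) :=
        Equiv.swap_apply_of_ne_of_ne (by simp) (by simp)
    simp [matchedBlocks, h1]
  · by_cases h : j = i
    · subst h; simp [matchedBlocks]
    · have h1 : Equiv.swap none (some (Sum.inr i)) (some (Sum.inr j))
          = (some (Sum.inr j) : Block m) :=
        Equiv.swap_apply_of_ne_of_ne (by simp) (by simpa using h)
      have h2 : Equiv.swap none (some i) (some j) = some j :=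
        Equiv.swap_apply_of_ne_of_ne (by simp) (by simpa using h)
      simp [matchedBlocks, h1, h2]

theorem comp_swap_of_eq {α β : Type*} [DecidableEq α] (D : α → β) {a b : α} (h : D a = D b) :
    D ∘ Equiv.swap a b = D := by
  ext c : 1
  simp only [Function.comp_apply, Equiv.swap_apply_def]
  split_ifs with h1 h2
  · rw [h1, h]
  · rw [h2, h]
  · rfl

theorem setBlocks_comp_swap_inr {m : ℕ} {x : Option (Fin m) → Bool} (hx : x none = false)
    (i : Option (Fin m)) : setBlocks x ∘ Equiv.swap none (i.map Sum.inr) = setBlocks x :=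
  comp_swap_of_eq _ (by rcases i with _ | i <;> simp [setBlocks, hx])

theorem matchedBlocks_comp_swap_inl {m : ℕ} {y : Option (Fin m) → Bool} (hy : y none = false)
    (i : Option (Fin m)) : matchedBlocks y ∘ Equiv.swap none (i.map Sum.inl) = matchedBlocks y :=
  comp_swap_of_eq _ (by rcases i with _ | i <;> simp [matchedBlocks, hy])

/-- A cyclic permutation of the special vertices and the vertices of the distinguished block. -/
def fiveCycle (m : ℕ) : Equiv.Perm (Vtx m) where
  toFun
    | Sum.inl 0 => Sum.inr (none, false)
    | Sum.inr (none, false) => Sum.inl 1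
    | Sum.inl 1 => Sum.inr (none, true)
    | Sum.inr (none, true) => Sum.inl 2
    | Sum.inl 2 => Sum.inl 0
    | Sum.inr (some q, b) => Sum.inr (some q, b)
  invFun
    | Sum.inr (none, false) => Sum.inl 0
    | Sum.inl 1 => Sum.inr (none, false)
    | Sum.inr (none, true) => Sum.inl 1
    | Sum.inl 2 => Sum.inr (none, true)
    | Sum.inl 0 => Sum.inl 2
    | Sum.inr (some q, b) => Sum.inr (some q, b)
  left_inv := by
    rintro (i | ⟨_ | q, _ | _⟩)
    · fin_cases i <;> rfl
    all_goals rfl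
  right_inv := by
    rintro (i | ⟨_ | q, _ | _⟩)
    · fin_cases i <;> rfl
    all_goals rfl

theorem fiveCycle_pow_five (m : ℕ) : fiveCycle m ^ 5 = 1 := by
  ext (i | ⟨_ | q, _ | _⟩) : 1
  · fin_cases i <;> rfl
  all_goals rfl

theorem blockSet_comp_fiveCycle {m : ℕ} {D : Block m → Bool} (h : D none = true) :
    blockSet D ∘ fiveCycle m = blockSet D := by
  ext (i | ⟨_ | q, _ | _⟩) : 1
  · fin_cases i <;> simp [fiveCycle, blockSet, h]
  all_goals simp [fiveCycle, blockSet, h]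

theorem relabel_fiveCycle {m : ℕ} {D : Block m → Bool} (h : D none = false) :
    relabel (fiveCycle m) (blockMatching D) = blockMatching D := by
  ext (i | ⟨_ | q, _ | _⟩) : 1
  · fin_cases i <;> simp [relabel, fiveCycle, blockMatching, h]
  · simp [relabel, fiveCycle, blockMatching, h]
  · simp [relabel, fiveCycle, blockMatching, h]
  all_goals by_cases hq : D (some q) = true <;> simp [relabel, fiveCycle, blockMatching, hq]

theorem card_defects_fiveCycle {m : ℕ} {x y : Option (Fin m) → Bool} (hx : x none = false)
    (hy : y none = false) :
    (defects (blockSet (setBlocks x))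
      (relabel (fiveCycle m) (blockMatching (matchedBlocks y)))).card = 1 := by
  rw [Finset.card_eq_one]
  refine ⟨Sum.inl 2, ?_⟩
  ext (i | ⟨_ | i | i, _ | _⟩)
  · fin_cases i <;>
      simp [mem_defects, relabel, fiveCycle, blockSet, blockMatching, setBlocks, matchedBlocks, hy]
  all_goals
    simp [mem_defects, relabel, fiveCycle, blockSet, blockMatching, setBlocks, matchedBlocks, hx]

theorem card_defects_false {m : ℕ} {x y : Option (Fin m) → Bool} (hx : x none = false) :
    (defects (blockSet (setBlocks x)) (blockMatching (matchedBlocks y))).card = 3 := by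
  rw [Finset.card_eq_three]
  refine ⟨Sum.inl 0, Sum.inl 1, Sum.inl 2, by simp, by simp, by simp, ?_⟩
  ext (i | ⟨_ | i | i, _ | _⟩)
  · fin_cases i <;> simp [mem_defects, blockSet, blockMatching]
  all_goals simp [mem_defects, blockSet, blockMatching, setBlocks, matchedBlocks, hx]

theorem card_defects_true {m : ℕ} {x y : Option (Fin m) → Bool} (hx : x none = true)
    (hy : y none = true) :
    (defects (blockSet (setBlocks x)) (blockMatching (matchedBlocks y))).card = 5 := by
  have : defects (blockSet (setBlocks x)) (blockMatching (matchedBlocks y)) =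
      {Sum.inl 0, Sum.inl 1, Sum.inl 2, Sum.inr (none, false), Sum.inr (none, true)} := by
    ext (i | ⟨_ | i | i, _ | _⟩)
    · fin_cases i <;> simp [mem_defects, blockSet, blockMatching]
    all_goals simp [mem_defects, blockSet, blockMatching, setBlocks, matchedBlocks, hx, hy]
  rw [this]
  simp [Finset.card_insert_of_notMem]

theorem bitSum_mul_bitSum {m : ℕ} (φ ψ : (Option (Fin m) → Bool) → ℝ) (b c : Bool) :
    bitSum φ b * bitSum ψ c = bitSum (fun x => bitSum (fun y => φ x * ψ y) c) b := by
  simp only [bitSum, Finset.sum_mul_sum]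
  refine Finset.sum_congr rfl fun x _ => ?_
  split_ifs <;> simp

theorem bitSum_sum {m : ℕ} {R : Type*} [Fintype R] (φ : R → (Option (Fin m) → Bool) → ℝ)
    (b : Bool) : bitSum (fun x => ∑ r, φ r x) b = ∑ r, bitSum (φ r) b := by
  simp only [bitSum]
  rw [Finset.sum_comm]
  refine Finset.sum_congr rfl fun x _ => ?_
  split_ifs <;> simp

theorem bitSum_const {m : ℕ} (a : ℝ) (b : Bool) :
    bitSum (fun _ : Option (Fin m) → Bool => a) b = a * 2 ^ m := by
  rw [← bitSum_one b, bitSum, bitSum, Finset.mul_sum]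
  exact Finset.sum_congr rfl fun _ _ => by simp

/-- The total weight of the vertex sets, relabelled along `τ`, that contain the distinguished
block iff `b` holds. -/
def setWeight {m : ℕ} (f : (Vtx m → Bool) → ℝ) (b : Bool) (τ : Equiv.Perm (Vtx m)) : ℝ :=
  bitSum (fun x => f (blockSet (setBlocks x) ∘ τ)) b

/-- The total weight of the matchings, relabelled along `τ`, that leave the distinguished block
unmatched iff `b` holds. -/
def matchingWeight {m : ℕ} (g : (Vtx m → Vtx m) → ℝ) (b : Bool) (τ : Equiv.Perm (Vtx m)) : ℝ :=
  bitSum (fun y => g (relabel τ (blockMatching (matchedBlocks y)))) b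

theorem setWeight_swap_mul {m : ℕ} (f : (Vtx m → Bool) → ℝ) (i : Option (Fin m))
    (τ : Equiv.Perm (Vtx m)) :
    setWeight f false (blockPerm (Equiv.swap none (i.map Sum.inr)) * τ) = setWeight f false τ := by
  refine bitSum_congr fun x hx => ?_
  rw [Equiv.Perm.coe_mul, ← Function.comp_assoc, blockSet_comp_blockPerm,
    setBlocks_comp_swap_inr hx]

theorem matchingWeight_swap_mul {m : ℕ} (g : (Vtx m → Vtx m) → ℝ) (i : Option (Fin m))
    (τ : Equiv.Perm (Vtx m)) :
    matchingWeight g false (blockPerm (Equiv.swap none (i.map Sum.inl)) * τ)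
      = matchingWeight g false τ := by
  refine bitSum_congr fun y hy => ?_
  rw [relabel_mul, relabel_blockPerm, matchedBlocks_comp_swap_inl hy]

theorem setWeight_fiveCycle_mul {m : ℕ} (f : (Vtx m → Bool) → ℝ) (τ : Equiv.Perm (Vtx m)) :
    setWeight f true (fiveCycle m * τ) = setWeight f true τ := by
  refine bitSum_congr fun x hx => ?_
  rw [Equiv.Perm.coe_mul, ← Function.comp_assoc, blockSet_comp_fiveCycle]
  exact hx

theorem matchingWeight_fiveCycle_mul {m : ℕ} (g : (Vtx m → Vtx m) → ℝ)
    (τ : Equiv.Perm (Vtx m)) :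
    matchingWeight g true (fiveCycle m * τ) = matchingWeight g true τ := by
  refine bitSum_congr fun y hy => ?_
  rw [relabel_mul, relabel_fiveCycle]
  simp [matchedBlocks, hy]

theorem setWeight_mul_matchingWeight_fiveCycle_mul {m : ℕ} {f : (Vtx m → Bool) → ℝ}
    {g : (Vtx m → Vtx m) → ℝ}
    (hfg : ∀ X π, Odd (Finset.univ.filter fun v => X v = true).card → Function.Involutive π →
      (defects X π).card = 1 → f X * g π = 0) (τ : Equiv.Perm (Vtx m)) :
    setWeight f false τ * matchingWeight g false (fiveCycle m * τ) = 0 := by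
  rw [setWeight, matchingWeight, bitSum_mul_bitSum,
    bitSum_congr (ψ := fun _ => 0) fun x hx => ?_, bitSum_const, zero_mul]
  rw [bitSum_congr (ψ := fun _ => 0) fun y hy => ?_, bitSum_const, zero_mul]
  rw [relabel_mul]
  refine hfg _ _ ?_ (involutive_relabel _ (involutive_relabel _ (involutive_blockMatching _))) ?_
  · rw [card_filter_comp_perm]
    exact odd_card_blockSet _
  · rw [card_defects_relabel]
    exact card_defects_fiveCycle hx hy

/-- If no two cyclically consecutive ones among five numbers are positive, their sum is controlled
by twice a common upper bound. -/
theorem sum_five_le {u e : ℕ → ℝ} {K : ℝ} (he : ∀ j, 0 ≤ e j)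
    (hu : ∀ j, u j ≤ K + e j) (h : ∀ j, u j * u (j + 1) = 0) (h5 : u 5 = u 0) :
    ∑ j ∈ Finset.range 5, u j ≤ 2 * K + ∑ j ∈ Finset.range 5, e j := by
  have h' : ∀ j, u j = 0 ∨ u (j + 1) = 0 := fun j => mul_eq_zero.1 (h j)
  simp only [Finset.sum_range_succ, Finset.sum_range_zero]
  have := he 0
  have := he 1
  have := he 2
  have := he 3
  have := he 4
  have := hu 0
  have := hu 1
  have := hu 2
  have := hu 3
  have := hu 4
  have h01 := h' 0
  have h12 := h' 1
  have h23 := h' 2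
  have h34 := h' 3
  have h40 := h' 4
  norm_num only [h5] at h01 h12 h23 h34 h40
  rcases h01 with h0 | h1
  · rcases h12 with h1 | h2
    · rcases h34 with h3 | h4 <;> linarith
    · rcases h34 with h3 | h4 <;> linarith
  · rcases h23 with h2 | h3
    · rcases h40 with h4 | h0 <;> linarith
    · rcases h40 with h4 | h0 <;> linarith

/-- A nonnegative rectangle avoiding all pairs with exactly one defect puts at most about `4 / 9` as
much weight on pairs with three defects as on pairs with five defects. -/
theorem nine_mul_sum_le {m : ℕ} {f : (Vtx m → Bool) → ℝ} {g : (Vtx m → Vtx m) → ℝ} {α β : ℝ}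
    (hf0 : ∀ X, 0 ≤ f X) (hfα : ∀ X, f X ≤ α) (hg0 : ∀ π, 0 ≤ g π) (hgβ : ∀ π, g π ≤ β)
    (hfg : ∀ X π, Odd (Finset.univ.filter fun v => X v = true).card → Function.Involutive π →
      (defects X π).card = 1 → f X * g π = 0) :
    9 * ∑ τ, setWeight f false τ * matchingWeight g false τ ≤
      4 * ∑ τ, setWeight f true τ * matchingWeight g true τ +
        21 * (Fintype.card (Equiv.Perm (Vtx m)) *
          (α * β * 4 ^ (m + 1) * Real.exp (-((1 / 41) ^ 2 * (m + 1) / 2)))) := by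
  have hF0 : ∀ b τ, 0 ≤ setWeight f b τ := fun b τ => bitSum_nonneg (fun x => hf0 _) b
  have hG0 : ∀ b τ, 0 ≤ matchingWeight g b τ := fun b τ => bitSum_nonneg (fun x => hg0 _) b
  have hF : ∀ b τ, setWeight f b τ ≤ α * 2 ^ (m + 1) := fun b τ =>
    bitSum_le (fun x => hf0 _) (fun x => hfα _) b
  have hG : ∀ b τ, matchingWeight g b τ ≤ β * 2 ^ (m + 1) := fun b τ =>
    bitSum_le (fun x => hg0 _) (fun x => hgβ _) b
  set E := ∑ τ, setWeight f false τ * matchingWeight g false τ with hE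
  set K := ∑ τ, setWeight f true τ * matchingWeight g true τ with hK
  set err := (Fintype.card (Equiv.Perm (Vtx m)) *
          (α * β * 4 ^ (m + 1) * Real.exp (-((1 / 41) ^ 2 * (m + 1) / 2))) : ℝ) with herr
  have hα : 0 ≤ α := (hf0 fun _ => true).trans (hfα _)
  have hβ : 0 ≤ β := (hg0 id).trans (hgβ _)
  have herr0 : 0 ≤ err := by positivity
  have h4 : (4 : ℝ) ^ (m + 1) = 2 ^ (m + 1) * 2 ^ (m + 1) := by rw [← mul_pow]; norm_num
  have hΔ := sum_abs_bitSum_sub_mul_le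
    (fun τ x => f (blockSet (setBlocks x) ∘ ⇑(τ : Equiv.Perm (Vtx m)))) (matchingWeight g false)
    (fun i => Equiv.mulLeft (blockPerm (Equiv.swap none (i.map Sum.inl))))
    (η := 1 / 41) (by norm_num) (fun _ _ => hf0 _) (fun _ _ => hfα _) (hG0 _) (hG _)
    (fun i τ x => by
      rw [Equiv.coe_mulLeft, Equiv.Perm.coe_mul, ← Function.comp_assoc, blockSet_comp_blockPerm,
        setBlocks_comp_swap_inl])
    (fun i τ => matchingWeight_swap_mul g i τ)
  have hΔ' := sum_abs_bitSum_sub_mul_le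
    (fun (τ : Equiv.Perm (Vtx m)) y => g (relabel τ (blockMatching (matchedBlocks y))))
    (setWeight f false)
    (fun i => Equiv.mulLeft (blockPerm (Equiv.swap none (i.map Sum.inr))))
    (η := 1 / 41) (by norm_num) (fun _ _ => hg0 _) (fun _ _ => hgβ _) (hF0 _) (hF _)
    (fun i τ y => by
      rw [Equiv.coe_mulLeft, relabel_mul, relabel_blockPerm, matchedBlocks_comp_swap_inr])
    (fun i τ => setWeight_swap_mul f i τ)
  change (1 - 1 / 41) * ∑ τ, |setWeight f false τ - setWeight f true τ| * matchingWeight g false τ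
    ≤ 2 * (1 / 41) * E + _ at hΔ
  have hE' : ∑ τ, matchingWeight g false τ * setWeight f false τ = E :=
    Finset.sum_congr rfl fun _ _ => mul_comm _ _
  change (1 - 1 / 41) * ∑ τ, |matchingWeight g false τ - matchingWeight g true τ| *
    setWeight f false τ ≤ 2 * (1 / 41) * (∑ τ, matchingWeight g false τ * setWeight f false τ) + _
      at hΔ'
  rw [hE'] at hΔ'
  set Δ := ∑ τ, |setWeight f false τ - setWeight f true τ| * matchingWeight g false τ with hΔdef
  set Δ' := ∑ τ, |matchingWeight g false τ - matchingWeight g true τ| * setWeight f false τ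
    with hΔdef'
  have herr1 : (Fintype.card (Equiv.Perm (Vtx m)) : ℝ) * (α * (β * 2 ^ (m + 1)) * 2 ^ (m + 1) *
      Real.exp (-((1 / 41) ^ 2 * (m + 1) / 2))) = err := by rw [herr, h4]; ring
  have herr2 : (Fintype.card (Equiv.Perm (Vtx m)) : ℝ) * (β * (α * 2 ^ (m + 1)) * 2 ^ (m + 1) *
      Real.exp (-((1 / 41) ^ 2 * (m + 1) / 2))) = err := by rw [herr, h4]; ring
  rw [herr1] at hΔ
  rw [herr2] at hΔ'
  set e : Equiv.Perm (Vtx m) → ℝ := fun τ =>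
    |setWeight f false τ - setWeight f true τ| * matchingWeight g false τ +
      |matchingWeight g false τ - matchingWeight g true τ| * setWeight f false τ with he
  have hle : ∀ τ, setWeight f false τ * matchingWeight g false τ ≤
      setWeight f true τ * matchingWeight g true τ + e τ := fun τ => by
    have hb := le_abs_self (matchingWeight g false τ - matchingWeight g true τ)
    have ha0 := mul_nonneg (abs_nonneg (setWeight f false τ - setWeight f true τ)) (hG0 false τ)
    rcases le_total (setWeight f false τ) (setWeight f true τ) with h | h
    · have h1 := mul_le_mul_of_nonneg_right h (hG0 true τ)
      have h2 := mul_le_mul_of_nonneg_left hb (hF0 false τ)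
      simp only [he]
      linarith
    · have h1 := mul_le_mul_of_nonneg_left hb (hF0 true τ)
      have h2 := mul_le_mul_of_nonneg_right h
        (abs_nonneg (matchingWeight g false τ - matchingWeight g true τ))
      simp only [he, abs_of_nonneg (sub_nonneg.2 h)]
      linarith
  have hrot : ∀ (u : Equiv.Perm (Vtx m) → ℝ) (j : ℕ), ∑ τ, u (fiveCycle m ^ j * τ) = ∑ τ, u τ :=
    fun u j => Equiv.sum_comp (Equiv.mulLeft (fiveCycle m ^ j)) u
  have hKrot : ∀ j τ, setWeight f true (fiveCycle m ^ j * τ) *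
      matchingWeight g true (fiveCycle m ^ j * τ) =
        setWeight f true τ * matchingWeight g true τ := fun j τ => by
    induction j with
    | zero => simp
    | succ j ih =>
      rw [pow_succ', mul_assoc, setWeight_fiveCycle_mul, matchingWeight_fiveCycle_mul, ih]
  have h5 : 5 * E ≤ 2 * K + 5 * (Δ + Δ') := by
    have hτ : ∀ τ, ∑ j ∈ Finset.range 5, setWeight f false (fiveCycle m ^ j * τ) *
        matchingWeight g false (fiveCycle m ^ j * τ) ≤
          2 * (setWeight f true τ * matchingWeight g true τ) +
            ∑ j ∈ Finset.range 5, e (fiveCycle m ^ j * τ) := fun τ => by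
      refine sum_five_le (u := fun j => setWeight f false (fiveCycle m ^ j * τ) *
        matchingWeight g false (fiveCycle m ^ j * τ)) (e := fun j => e (fiveCycle m ^ j * τ))
        (fun j => add_nonneg (mul_nonneg (abs_nonneg _) (hG0 _ _))
          (mul_nonneg (abs_nonneg _) (hF0 _ _)))
        (fun j => (hle _).trans_eq (by rw [hKrot])) (fun j => ?_) (by simp [fiveCycle_pow_five])
      have := setWeight_mul_matchingWeight_fiveCycle_mul hfg (fiveCycle m ^ j * τ)
      rw [← mul_assoc, ← pow_succ'] at this
      linear_combination matchingWeight g false (fiveCycle m ^ j * τ) *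
        setWeight f false (fiveCycle m ^ (j + 1) * τ) * this
    have := Finset.sum_le_sum fun τ (_ : τ ∈ Finset.univ) => hτ τ
    rw [Finset.sum_add_distrib, ← Finset.mul_sum, Finset.sum_comm,
      Finset.sum_comm (f := fun τ j => e (fiveCycle m ^ j * τ)),
      Finset.sum_congr rfl fun j _ =>
        hrot (fun τ => setWeight f false τ * matchingWeight g false τ) j,
      Finset.sum_congr rfl fun j _ => hrot e j] at this
    simp only [Finset.sum_const, Finset.card_range, nsmul_eq_mul, he,
      Finset.sum_add_distrib] at this
    exact_mod_cast this
  linarith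

/-- A nonnegative factorization of the number of defects minus one has exponentially many
terms. -/
theorem exp_le_of_nonneg_factorization {m : ℕ} {R : Type*} [Fintype R]
    (a : R → (Vtx m → Bool) → ℝ) (b : R → (Vtx m → Vtx m) → ℝ)
    (ha : ∀ r X, Odd (Finset.univ.filter fun v => X v = true).card → 0 ≤ a r X)
    (hb : ∀ r π, Function.Involutive π → 0 ≤ b r π)
    (hab : ∀ X π, Odd (Finset.univ.filter fun v => X v = true).card → Function.Involutive π →
      ((defects X π).card : ℝ) - 1 = ∑ r, a r X * b r π) :
    Real.exp ((1 / 41) ^ 2 * (m + 1) / 2) ≤ 42 * (Fintype.card R * (4 * m + 5)) := by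
  classical
  set f : R → (Vtx m → Bool) → ℝ := fun r X =>
    if Odd (Finset.univ.filter fun v => X v = true).card then a r X else 0 with hf
  set g : R → (Vtx m → Vtx m) → ℝ := fun r π =>
    if Function.Involutive π then b r π else 0 with hg
  have hf0 : ∀ r X, 0 ≤ f r X := fun r X => by
    simp only [hf]; split_ifs with h
    exacts [ha r X h, le_rfl]
  have hg0 : ∀ r π, 0 ≤ g r π := fun r π => by
    simp only [hg]; split_ifs with h
    exacts [hb r π h, le_rfl]
  have hfg : ∀ X π, Odd (Finset.univ.filter fun v => X v = true).card → Function.Involutive π →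
      ∑ r, f r X * g r π = ((defects X π).card : ℝ) - 1 := fun X π hX hπ => by
    simp only [hf, hg, if_pos hX, if_pos hπ, hab X π hX hπ]
  choose X₀ hX₀ using fun r => Finite.exists_max (f r)
  choose π₀ hπ₀ using fun r => Finite.exists_max (g r)
  have hcard : Fintype.card (Vtx m) = 4 * m + 5 := by
    simp [Fintype.card_sum, Fintype.card_prod]; ring
  have hmax : ∀ r, f r (X₀ r) * g r (π₀ r) ≤ 4 * m + 5 := fun r => by
    by_cases hX : Odd (Finset.univ.filter fun v => X₀ r v = true).card
    · by_cases hπ : Function.Involutive (π₀ r)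
      · have h1 := Finset.single_le_sum (f := fun s => f s (X₀ r) * g s (π₀ r))
          (fun s _ => mul_nonneg (hf0 s _) (hg0 s _)) (Finset.mem_univ r)
        rw [hfg _ _ hX hπ] at h1
        have h2 : ((defects (X₀ r) (π₀ r)).card : ℝ) ≤ 4 * m + 5 := by
          have := Finset.card_le_univ (defects (X₀ r) (π₀ r))
          rw [hcard] at this
          exact_mod_cast this
        linarith
      · rw [show g r (π₀ r) = 0 from if_neg hπ, mul_zero]; positivity
    · rw [show f r (X₀ r) = 0 from if_neg hX, zero_mul]; positivity
  have hodd : ∀ (x : Option (Fin m) → Bool) (τ : Equiv.Perm (Vtx m)),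
      Odd (Finset.univ.filter fun v => (blockSet (setBlocks x) ∘ τ) v = true).card :=
    fun x τ => by rw [card_filter_comp_perm]; exact odd_card_blockSet _
  have hinv : ∀ (y : Option (Fin m) → Bool) (τ : Equiv.Perm (Vtx m)),
      Function.Involutive (relabel τ (blockMatching (matchedBlocks y))) :=
    fun y τ => involutive_relabel _ (involutive_blockMatching _)
  have hsum : ∀ (c : Bool) (k : ℝ), (∀ x y : Option (Fin m) → Bool, x none = c → y none = c →
      ((defects (blockSet (setBlocks x)) (blockMatching (matchedBlocks y))).card : ℝ) - 1 = k) →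
      ∑ r, ∑ τ, setWeight (f r) c τ * matchingWeight (g r) c τ
        = Fintype.card (Equiv.Perm (Vtx m)) * (k * 4 ^ m) := fun c k hk => by
    rw [Finset.sum_comm, ← nsmul_eq_mul, ← Finset.card_univ, ← Finset.sum_const]
    refine Finset.sum_congr rfl fun τ _ => ?_
    simp only [setWeight, matchingWeight, bitSum_mul_bitSum]
    rw [← bitSum_sum]
    simp only [← bitSum_sum]
    rw [bitSum_congr (ψ := fun _ => k * 2 ^ m) fun x hx => ?_, bitSum_const, mul_assoc, ← mul_pow]
    · norm_num
    rw [bitSum_congr (ψ := fun _ => k) fun y hy => ?_, bitSum_const]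
    rw [hfg _ _ (hodd x τ) (hinv y τ), card_defects_relabel, hk x y hx hy]
  have h3 := hsum false 2 fun x y hx _ => by rw [card_defects_false hx]; norm_num
  have h5 := hsum true 4 fun x y hx hy => by rw [card_defects_true hx hy]; norm_num
  have hcore := Finset.sum_le_sum fun r (_ : r ∈ Finset.univ) =>
    nine_mul_sum_le (hf0 r) (hX₀ r) (hg0 r) (hπ₀ r) fun X π hX hπ h1 => by
      have h2 := hfg X π hX hπ
      rw [h1, Nat.cast_one, sub_self,
        Finset.sum_eq_zero_iff_of_nonneg fun s _ => mul_nonneg (hf0 s _) (hg0 s _)] at h2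
      exact h2 r (Finset.mem_univ r)
  rw [Finset.sum_add_distrib, ← Finset.mul_sum, ← Finset.mul_sum, ← Finset.mul_sum, h3, h5,
    ← Finset.mul_sum] at hcore
  set N := (Fintype.card (Equiv.Perm (Vtx m)) : ℝ) with hN
  have hN0 : 0 < N := by rw [hN]; exact_mod_cast Fintype.card_pos
  set x := Real.exp ((1 / 41) ^ 2 * (m + 1) / 2) with hx
  have hx0 : 0 < x := Real.exp_pos _
  have hxi : Real.exp (-((1 / 41) ^ 2 * (m + 1) / 2)) = x⁻¹ := Real.exp_neg _
  rw [hxi] at hcore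
  have hbound : ∑ r, f r (X₀ r) * g r (π₀ r) * 4 ^ (m + 1) * x⁻¹ ≤
      Fintype.card R * (4 * m + 5) * 4 ^ (m + 1) * x⁻¹ := by
    rw [← Finset.sum_mul, ← Finset.sum_mul]
    gcongr
    refine (Finset.sum_le_sum fun r _ => hmax r).trans_eq ?_
    rw [Finset.sum_const, nsmul_eq_mul, Finset.card_univ]
  have h6 : N * 4 ^ m * x⁻¹ * (2 * x) ≤
      N * 4 ^ m * x⁻¹ * (84 * (Fintype.card R * (4 * m + 5))) := by
    have := mul_le_mul_of_nonneg_left hbound (mul_nonneg (by norm_num : (0 : ℝ) ≤ 21) hN0.le)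
    have h7 : N * 4 ^ m * x⁻¹ * (2 * x) = 2 * (N * 4 ^ m) := by field_simp
    rw [h7]
    rw [pow_succ] at this hcore
    linarith
  have := le_of_mul_le_mul_left h6 (by positivity)
  linarith

theorem load_comp_equiv {J : Type*} [Fintype J] [DecidableEq J] {M : ℕ} (e : J ≃ Fin M)
    (p : Fin M → ℕ) (σ : Fin M → Fin M) (i : J) :
    load p σ (e i) = ∑ j, if e.symm (σ (e j)) = i then p (e j) else 0 := by
  rw [load, ← Equiv.sum_comp e]
  simp [Equiv.symm_apply_eq]

/-- The processing times: one unit job and one job of size two for every vertex. -/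
def jobSize {V : Type*} : V ⊕ V → ℕ := Sum.elim (fun _ => 1) (fun _ => 2)

theorem two_le_makespan {V : Type*} [Fintype V] [DecidableEq V] {M : ℕ} (e : V ⊕ V ≃ Fin M) (v : V)
    (σ : Fin M → Fin M) : 2 ≤ makespan (jobSize ∘ e.symm) σ := by
  have h1 : (jobSize ∘ e.symm) (e (Sum.inr v)) = 2 := by simp [jobSize]
  calc 2 = if σ (e (Sum.inr v)) = σ (e (Sum.inr v))
          then (jobSize ∘ e.symm) (e (Sum.inr v)) else 0 := by
        rw [if_pos rfl, h1]
    _ ≤ load (jobSize ∘ e.symm) σ (σ (e (Sum.inr v))) :=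
        Finset.single_le_sum (f := fun j => if σ j = σ (e (Sum.inr v))
          then (jobSize ∘ e.symm) j else 0) (fun _ _ => Nat.zero_le _) (Finset.mem_univ _)
    _ ≤ _ := Finset.le_sup (f := load (jobSize ∘ e.symm) σ) (Finset.mem_univ _)

/-- The vertices whose unit job runs on their home machine. -/
def homeSet {V : Type*} [Fintype V] [DecidableEq V] (s : V ⊕ V → V ⊕ V) : Finset V :=
  {v | s (Sum.inl v) = Sum.inl v}

/-- The vertices whose long job runs on a home machine. -/
def longSet {V : Type*} [Fintype V] (s : V ⊕ V → V ⊕ V) : Finset V :=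
  {v | (s (Sum.inr v)).isLeft = true}

/-- The vertices of `X` whose unit job runs on the home machine of another vertex of `X`. -/
def movedSet {V : Type*} [Fintype V] [DecidableEq V] (X : V → Bool) (s : V ⊕ V → V ⊕ V) :
    Finset V :=
  {u | ∃ v, s (Sum.inl u) = Sum.inl v ∧ v ≠ u ∧ X u = true ∧ X v = true}

theorem mem_longSet {V : Type*} [Fintype V] {s : V ⊕ V → V ⊕ V} {v : V} :
    v ∈ longSet s ↔ (s (Sum.inr v)).isLeft = true := by
  simp [longSet]

/-- If every vertex keeps its unit job or a long job on its home machine, and all loads are at most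
two, then the moved unit jobs of `X` are matched injectively to unit jobs of `X` at home. -/
theorem movedSet_bound {V : Type*} [Fintype V] [DecidableEq V] {s : V ⊕ V → V ⊕ V}
    (hs : ∀ i, (∑ j, if s j = i then jobSize j else 0) ≤ 2) {X : V → Bool}
    (hX : Odd (Finset.univ.filter fun v => X v = true).card) :
    (homeSet s).card + (longSet s).card ≤ Fintype.card V ∧
      ((homeSet s).card + (longSet s).card = Fintype.card V →
        2 * (movedSet X s).card + 1 ≤ (Finset.univ.filter fun v => X v = true).card) := by
  have hT : ∀ (T : Finset (V ⊕ V)) (i : V ⊕ V), (∀ j ∈ T, s j = i) → ∑ j ∈ T, jobSize j ≤ 2 :=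
    fun T i hi => by
      refine le_trans ?_ (hs i)
      rw [← Finset.sum_filter]
      exact Finset.sum_le_sum_of_subset fun j hj => by simp [hi j hj]
  have hlong : ∀ w j i, s (Sum.inr w) = i → s j = i → j = Sum.inr w := fun w j i hw hj => by
    by_contra hne
    have := hT {j, Sum.inr w} i (by simp [hw, hj])
    rw [Finset.sum_pair hne] at this
    rcases j with j | j <;> simp [jobSize] at this
  have hthree : ∀ a b c i, s a = i → s b = i → s c = i → a ≠ b → a ≠ c → b = c :=
    fun a b c i ha hb hc hab hac => by
      by_contra hbc
      have := hT {a, b, c} i (by simp [ha, hb, hc])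
      rw [Finset.sum_insert (by simp [hab, hac]), Finset.sum_pair hbc] at this
      have hpos : ∀ j : V ⊕ V, 1 ≤ jobSize j := by rintro (j | j) <;> simp [jobSize]
      have := hpos a
      have := hpos b
      have := hpos c
      omega
  set D : Finset V := {v | ∃ w, s (Sum.inr w) = Sum.inl v} with hD
  have hDcard : (longSet s).card ≤ D.card := by
    have hmem : ∀ w ∈ longSet s, ∃ v, s (Sum.inr w) = Sum.inl v := fun w hw => by
      simpa [longSet, Sum.isLeft_iff] using hw
    choose! d hd using hmem
    refine Finset.card_le_card_of_injOn d (fun w hw => ?_) fun w hw w' hw' h => ?_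
    · simp only [hD, Finset.mem_coe, Finset.mem_filter_univ]
      exact ⟨w, hd w hw⟩
    · have h1 := hd w hw
      rw [h, ← hd w' hw'] at h1
      exact Sum.inr_injective (hlong w' _ _ rfl h1)
  have hdisj : Disjoint (homeSet s) D := by
    rw [Finset.disjoint_left]
    intro v hv hvD
    simp only [homeSet, hD, Finset.mem_filter, Finset.mem_univ, true_and] at hv hvD
    obtain ⟨w, hw⟩ := hvD
    simpa using hlong w _ _ hw hv
  have hunion : (homeSet s).card + D.card = (homeSet s ∪ D).card :=
    (Finset.card_union_of_disjoint hdisj).symm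
  have hle := Finset.card_le_univ (homeSet s ∪ D)
  refine ⟨by omega, fun heq => ?_⟩
  have huniv : homeSet s ∪ D = Finset.univ := by
    rw [← Finset.card_eq_iff_eq_univ]
    omega
  have hmem : ∀ u ∈ movedSet X s,
      ∃ v, s (Sum.inl u) = Sum.inl v ∧ v ≠ u ∧ X u = true ∧ X v = true :=
    fun u hu => by simpa [movedSet] using hu
  choose! d hd1 hd2 hd3 hd4 using hmem
  have hhome : ∀ u ∈ movedSet X s, s (Sum.inl (d u)) = Sum.inl (d u) := fun u hu => by
    have h1 : d u ∈ homeSet s ∪ D := huniv ▸ Finset.mem_univ _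
    rcases Finset.mem_union.1 h1 with h | h
    · simpa [homeSet] using h
    · simp only [hD, Finset.mem_filter, Finset.mem_univ, true_and] at h
      obtain ⟨w, hw⟩ := h
      simpa using hlong w _ _ hw (hd1 u hu)
  set Y : Finset V := Finset.univ.filter fun v => X v = true with hY
  have h1 : (movedSet X s).card ≤ (Y ∩ homeSet s).card := by
    refine Finset.card_le_card_of_injOn d (fun u hu => ?_) fun u hu u' hu' h => ?_
    · simp [hY, homeSet, hd4 u hu, hhome u hu]
    · have h2 := hd1 u' hu'
      rw [← h] at h2
      refine Sum.inl_injective (hthree _ _ _ _ (hhome u hu) (hd1 u hu) h2 ?_ ?_)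
      · simpa using hd2 u hu
      · rw [h]; simpa using hd2 u' hu'
  have h2 : (movedSet X s).card ≤ (Y \ homeSet s).card := by
    refine Finset.card_le_card fun u hu => ?_
    simp [hY, homeSet, hd3 u hu, hd1 u hu, hd2 u hu]
  have h3 := Finset.card_inter_add_card_sdiff Y (homeSet s)
  obtain ⟨k, hk⟩ := hX
  omega

/-- The coefficients of the separating functional: `κ` rewards occupied home machines, while unit
jobs moved within `X` cost two. -/
def homeWeight {V : Type*} [DecidableEq V] (κ : ℝ) (X : V → Bool) : V ⊕ V → V ⊕ V → ℝ
  | Sum.inl v, Sum.inl u => if v = u then -κ else if X u = true ∧ X v = true then -2 else 0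
  | Sum.inl _, Sum.inr _ => -κ
  | Sum.inr _, _ => 0

theorem sum_homeWeight {V : Type*} [Fintype V] [DecidableEq V] (κ : ℝ) (X : V → Bool)
    (s : V ⊕ V → V ⊕ V) : ∑ j, homeWeight κ X (s j) j =
      -κ * ((homeSet s).card + (longSet s).card) - 2 * (movedSet X s).card := by
  have h1 : ∀ u, homeWeight κ X (s (Sum.inl u)) (Sum.inl u) =
      -κ * (if u ∈ homeSet s then 1 else 0) - 2 * (if u ∈ movedSet X s then 1 else 0) := fun u => by
    rcases h : s (Sum.inl u) with v | v
    · by_cases hv : v = u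
      · subst hv
        simp [homeWeight, homeSet, movedSet, h]
      · by_cases hX : X u = true ∧ X v = true <;>
          simp [homeWeight, homeSet, movedSet, h, hv, hX]
    · simp [homeWeight, homeSet, movedSet, h]
  have h2 : ∀ w, homeWeight κ X (s (Sum.inr w)) (Sum.inr w) =
      -κ * (if w ∈ longSet s then 1 else 0) := fun w => by
    rcases h : s (Sum.inr w) with v | v <;> simp [homeWeight, longSet, h]
  rw [Fintype.sum_sum_type, Finset.sum_congr rfl fun u _ => h1 u,
    Finset.sum_congr rfl fun w _ => h2 w, Finset.sum_sub_distrib, ← Finset.mul_sum,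
    ← Finset.mul_sum, ← Finset.mul_sum]
  simp only [Finset.sum_boole, Finset.filter_mem_eq_inter, Finset.univ_inter]
  ring

/-- The schedule of a matching `π`: for every matched pair, the unit jobs run together on the home
machine of its first vertex, and the home machine of its second vertex runs a long job. -/
def matchingSchedule {V : Type*} (key : V → ℕ) (π : V → V) : V ⊕ V → V ⊕ V :=
  Sum.elim (fun v => Sum.inl (if key v ≤ key (π v) then v else π v))
    (fun w => if key (π w) < key w then Sum.inl w else Sum.inr w)

theorem load_matchingSchedule_le {V : Type*} [Fintype V] [DecidableEq V] (key : V → ℕ) {π : V → V}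
    (hπ : Function.Involutive π) (i : V ⊕ V) :
    (∑ j, if matchingSchedule key π j = i then jobSize j else 0) ≤ 2 := by
  have hlong : ∀ v : V, (∑ w, if w = v then (2 : ℕ) else 0) = 2 := fun v => by simp
  rw [Fintype.sum_sum_type]
  rcases i with v | v
  · by_cases hv : key v ≤ key (π v)
    · have h1 : (∑ u, if matchingSchedule key π (Sum.inl u) = Sum.inl v
          then jobSize (Sum.inl u : V ⊕ V) else 0) ≤ 2 := by
        rw [← Finset.sum_filter]
        refine (Finset.sum_le_sum_of_subset (t := {v, π v}) fun u hu => ?_).trans ?_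
        · simp only [matchingSchedule, Sum.elim_inl, Sum.inl.injEq, Finset.mem_filter,
            Finset.mem_univ, true_and] at hu
          split_ifs at hu
          · simp [hu]
          · simp [← hu, hπ u]
        · simpa [jobSize] using Finset.card_le_two
      have h2 : (∑ w, if matchingSchedule key π (Sum.inr w) = Sum.inl v
          then jobSize (Sum.inr w : V ⊕ V) else 0) = 0 := by
        refine Finset.sum_eq_zero fun w _ => if_neg fun hw => ?_
        simp only [matchingSchedule, Sum.elim_inr] at hw
        split_ifs at hw with hlt
        rw [Sum.inl.injEq] at hw
        rw [hw] at hlt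
        omega
      omega
    · have h1 : (∑ u, if matchingSchedule key π (Sum.inl u) = Sum.inl v
          then jobSize (Sum.inl u : V ⊕ V) else 0) = 0 := by
        refine Finset.sum_eq_zero fun u _ => if_neg fun hu => ?_
        simp only [matchingSchedule, Sum.elim_inl, Sum.inl.injEq] at hu
        split_ifs at hu with h
        · rw [hu] at h; exact hv h
        · rw [← hu, hπ u] at hv; omega
      rw [h1, zero_add, ← hlong v]
      refine Finset.sum_le_sum fun w _ => ?_
      by_cases hw : w = v
      · rw [if_pos hw]
        split_ifs <;> simp [jobSize]
      · rw [if_neg hw, if_neg]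
        simp only [matchingSchedule, Sum.elim_inr]
        split_ifs <;> simp [hw]
  · have h1 : (∑ u, if matchingSchedule key π (Sum.inl u) = Sum.inr v
        then jobSize (Sum.inl u : V ⊕ V) else 0) = 0 :=
      Finset.sum_eq_zero fun u _ => if_neg (by simp [matchingSchedule])
    rw [h1, zero_add, ← hlong v]
    refine Finset.sum_le_sum fun w _ => ?_
    by_cases hw : w = v
    · rw [if_pos hw]
      split_ifs <;> simp [jobSize]
    · rw [if_neg hw, if_neg]
      simp only [matchingSchedule, Sum.elim_inr]
      split_ifs <;> simp [hw]

theorem sum_homeWeight_matchingSchedule {V : Type*} [Fintype V] [DecidableEq V] (κ : ℝ)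
    (X : V → Bool) {key : V → ℕ} (hkey : Function.Injective key) {π : V → V}
    (hπ : Function.Involutive π) :
    ∑ j, homeWeight κ X (matchingSchedule key π j) j = -κ * Fintype.card V +
      ((defects X π).card - (Finset.univ.filter fun v => X v = true).card) := by
  have h1 : homeSet (matchingSchedule key π) = Finset.univ.filter fun v => key v ≤ key (π v) := by
    ext v
    simp only [homeSet, matchingSchedule, Sum.elim_inl, Sum.inl.injEq, Finset.mem_filter,
      Finset.mem_univ, true_and, ite_eq_left_iff]
    refine ⟨fun h => ?_, fun h h' => absurd h h'⟩
    by_contra h'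
    rw [h h'] at h'
    exact h' le_rfl
  have h2 : longSet (matchingSchedule key π)
      = Finset.univ.filter fun v => ¬ key v ≤ key (π v) := by
    ext v
    rw [mem_longSet, Finset.mem_filter_univ, not_le, matchingSchedule, Sum.elim_inr]
    split_ifs with h <;> simp [h]
  have h3 : movedSet X (matchingSchedule key π) = Finset.univ.filter fun v =>
      (X v = true ∧ π v ≠ v ∧ X (π v) = true) ∧ ¬ key v ≤ key (π v) := by
    ext v
    simp only [movedSet, matchingSchedule, Sum.elim_inl, Sum.inl.injEq, Finset.mem_filter,
      Finset.mem_univ, true_and]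
    split_ifs with h
    · simp +contextual [h]
    · simp only [h, not_false_eq_true, and_true]
      constructor
      · rintro ⟨w, rfl, h1, h2, h3⟩
        exact ⟨h2, h1, h3⟩
      · rintro ⟨h1, h2, h3⟩
        exact ⟨_, rfl, h2, h1, h3⟩
  have h4 : (Finset.univ.filter fun v =>
        (X v = true ∧ π v ≠ v ∧ X (π v) = true) ∧ key v ≤ key (π v)).card =
      (movedSet X (matchingSchedule key π)).card := by
    rw [h3]
    refine Finset.card_bij (fun v _ => π v) ?_ (fun v _ w _ h => hπ.injective h) ?_
    · intro v hv
      simp only [Finset.mem_filter, Finset.mem_univ, true_and, hπ v] at hv ⊢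
      obtain ⟨⟨h1, h2, h3⟩, h4⟩ := hv
      exact ⟨⟨h3, h2.symm, h1⟩, fun h => h2 (hkey (le_antisymm h h4))⟩
    · intro v hv
      refine ⟨π v, ?_, hπ v⟩
      simp only [Finset.mem_filter, Finset.mem_univ, true_and, hπ v] at hv ⊢
      obtain ⟨⟨h1, h2, h3⟩, h4⟩ := hv
      exact ⟨⟨h3, h2.symm, h1⟩, (not_le.1 h4).le⟩
  have h5 : (homeSet (matchingSchedule key π)).card + (longSet (matchingSchedule key π)).card
      = Fintype.card V := by
    rw [h1, h2, Finset.card_filter_add_card_filter_not, Finset.card_univ]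
  have h6 : (Finset.univ.filter fun v => X v = true).card =
      (defects X π).card + 2 * (movedSet X (matchingSchedule key π)).card := by
    have hd : (Finset.univ.filter fun v => X v = true).card = (defects X π).card +
        (Finset.univ.filter fun v => X v = true ∧ π v ≠ v ∧ X (π v) = true).card := by
      rw [← Finset.card_filter_add_card_filter_not (s := Finset.univ.filter fun v => X v = true)
        (p := fun v => π v = v ∨ X (π v) = false), Finset.filter_filter, Finset.filter_filter]
      simp [defects]
    have hsplit := Finset.card_filter_add_card_filter_not
      (s := Finset.univ.filter fun v => X v = true ∧ π v ≠ v ∧ X (π v) = true)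
      (p := fun v => key v ≤ key (π v))
    rw [Finset.filter_filter, Finset.filter_filter, h4, ← h3] at hsplit
    omega
  rw [sum_homeWeight, h6, ← h5]
  push_cast
  ring

/-- The schedule on `Fin M` corresponding to a schedule on jobs and machines labelled by `J`. -/
def transport {J : Type*} {M : ℕ} (e : J ≃ Fin M) (s : J → J) : Fin M → Fin M :=
  fun j => e (s (e.symm j))

/-- The point of `P(J,M)` given by a schedule and a bound on its makespan. -/
def schedulePoint {n m : ℕ} (σ : Fin n → Fin m) (t : ℝ) : Option (Fin m × Fin n) → ℝ :=
  fun q => Option.elim q t (fun ij => assignVec σ ij)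

/-- An affine functional given by its coefficients. -/
def affineForm {ι : Type*} [Fintype ι] (a : ι → ℝ) (c : ℝ) : (ι → ℝ) →ᵃ[ℝ] ℝ :=
  (∑ i, a i • LinearMap.proj i : (ι → ℝ) →ₗ[ℝ] ℝ).toAffineMap + AffineMap.const ℝ _ c

theorem affineForm_apply {ι : Type*} [Fintype ι] (a : ι → ℝ) (c : ℝ) (z : ι → ℝ) :
    affineForm a c z = ∑ i, a i * z i + c := by
  simp [affineForm]

/-- The functional separating the vertex set `X` on `P(J,M)`. -/
def separator {V : Type*} [Fintype V] [DecidableEq V] {M : ℕ} (e : V ⊕ V ≃ Fin M) (X : V → Bool) :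
    (Option (Fin M × Fin M) → ℝ) →ᵃ[ℝ] ℝ :=
  affineForm
    (fun q => q.elim (2 * Fintype.card V + 2 * Fintype.card V ^ 2) fun ij =>
      homeWeight (2 * Fintype.card V) X (e.symm ij.1) (e.symm ij.2))
    ((Finset.univ.filter fun v => X v = true).card - 1 + 2 * Fintype.card V * Fintype.card V
      - 2 * (2 * Fintype.card V + 2 * Fintype.card V ^ 2))

theorem separator_schedulePoint {V : Type*} [Fintype V] [DecidableEq V] {M : ℕ}
    (e : V ⊕ V ≃ Fin M) (X : V → Bool) (σ : Fin M → Fin M) (t : ℝ) :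
    separator e X (schedulePoint σ t) = (Finset.univ.filter fun v => X v = true).card - 1 +
      2 * Fintype.card V * Fintype.card V +
      (∑ j, homeWeight (2 * Fintype.card V) X (e.symm (σ (e j))) j) +
      (2 * Fintype.card V + 2 * Fintype.card V ^ 2) * (t - 2) := by
  rw [separator, affineForm_apply, Fintype.sum_option, Fintype.sum_prod_type_right,
    ← Equiv.sum_comp e]
  simp only [schedulePoint, Option.elim_none, Option.elim_some, assignVec, mul_ite, mul_one,
    mul_zero, Finset.sum_ite_eq, Finset.mem_univ, if_true, Equiv.symm_apply_apply]
  ring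

theorem separator_nonneg {V : Type*} [Fintype V] [DecidableEq V] [Nonempty V] {M : ℕ}
    (e : V ⊕ V ≃ Fin M) {X : V → Bool} (hX : Odd (Finset.univ.filter fun v => X v = true).card)
    {z : Option (Fin M × Fin M) → ℝ} (hz : z ∈ Ppoly M M (jobSize ∘ e.symm)) :
    0 ≤ separator e X z := by
  have hconv : Convex ℝ {z | 0 ≤ separator e X z} := (convex_Ici 0).affine_preimage (separator e X)
  refine convexHull_min ?_ hconv hz
  rintro _ ⟨σ, t, ht, rfl⟩
  change 0 ≤ separator e X (schedulePoint σ t)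
  set s : V ⊕ V → V ⊕ V := fun j => e.symm (σ (e j)) with hs
  have ht2 : 2 ≤ t :=
    (two_le_makespan e (Classical.arbitrary V) σ).trans (Finset.sup_le fun i _ => ht i)
  rw [separator_schedulePoint, sum_homeWeight _ X s]
  have hA := Finset.card_le_univ (homeSet s)
  have hB := Finset.card_le_univ (longSet s)
  have hM := Finset.card_le_univ (movedSet X s)
  have hV : 0 < Fintype.card V := Fintype.card_pos
  have hX0 := hX.pos
  set N := Fintype.card V
  set A := (homeSet s).card
  set B := (longSet s).card
  set μ := (movedSet X s).card
  set x := (Finset.univ.filter fun v => X v = true).card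
  have hA' : (A : ℝ) ≤ N := by exact_mod_cast hA
  have hB' : (B : ℝ) ≤ N := by exact_mod_cast hB
  have hM' : (μ : ℝ) ≤ N := by exact_mod_cast hM
  have hx' : (1 : ℝ) ≤ x := by exact_mod_cast hX0
  have hN' : (0 : ℝ) ≤ N := Nat.cast_nonneg _
  rcases ht2.eq_or_lt with h2 | h3
  · have hload : ∀ i, (∑ j, if s j = i then jobSize j else 0) ≤ 2 := fun i => by
      have := ht (e i)
      rw [load_comp_equiv, ← h2] at this
      simpa using this
    obtain ⟨hle, heq⟩ := movedSet_bound hload hX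
    rw [← h2]
    rcases hle.eq_or_lt with h | h
    · have h4 : (2 * μ + 1 : ℝ) ≤ x := by exact_mod_cast heq h
      have h5 : (A + B : ℝ) = N := by exact_mod_cast h
      rw [h5]
      push_cast
      linarith
    · have h5 : (A + B + 1 : ℝ) ≤ N := by exact_mod_cast h
      have h6 := mul_le_mul_of_nonneg_left h5 (mul_nonneg zero_le_two hN')
      push_cast
      linarith
  · have h4 : (1 : ℝ) ≤ t - 2 := by
      have : (3 : ℝ) ≤ t := by exact_mod_cast h3
      linarith
    have h5 : (2 * N + 2 * N ^ 2 : ℝ) ≤ (2 * N + 2 * N ^ 2) * (t - 2) :=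
      le_mul_of_one_le_right (by positivity) h4
    have h6 := mul_le_mul_of_nonneg_left (add_le_add hA' hB') (mul_nonneg zero_le_two hN')
    nlinarith

theorem makespan_transport_matchingSchedule {V : Type*} [Fintype V] [DecidableEq V] [Nonempty V]
    {M : ℕ} (e : V ⊕ V ≃ Fin M) (key : V → ℕ) {π : V → V} (hπ : Function.Involutive π) :
    makespan (jobSize ∘ e.symm) (transport e (matchingSchedule key π)) = 2 := by
  refine le_antisymm (Finset.sup_le fun i _ => ?_) (two_le_makespan e (Classical.arbitrary V) _)
  rw [← e.apply_symm_apply i, load_comp_equiv]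
  simpa [transport] using load_matchingSchedule_le key hπ (e.symm i)

theorem separator_matchingSchedule {V : Type*} [Fintype V] [DecidableEq V] {M : ℕ}
    (e : V ⊕ V ≃ Fin M) (X : V → Bool) {key : V → ℕ} (hkey : Function.Injective key) {π : V → V}
    (hπ : Function.Involutive π) :
    separator e X (schedulePoint (transport e (matchingSchedule key π)) 2) =
      (defects X π).card - 1 := by
  rw [separator_schedulePoint]
  simp only [transport, Equiv.symm_apply_apply]
  rw [sum_homeWeight_matchingSchedule _ X hkey hπ]
  ring

theorem optMakespan_eq_two {V : Type*} [Fintype V] [DecidableEq V] [Nonempty V] {M : ℕ}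
    (e : V ⊕ V ≃ Fin M) : optMakespan M M (jobSize ∘ e.symm) = 2 := by
  have h2 := makespan_transport_matchingSchedule e (fun _ => 0) (π := id) fun _ => rfl
  refine le_antisymm (Nat.sInf_le ⟨_, h2⟩) ?_
  refine le_csInf ⟨2, _, h2⟩ ?_
  rintro _ ⟨σ, rfl⟩
  exact two_le_makespan e (Classical.arbitrary V) σ

theorem exp_le_xc {m M : ℕ} (e : Vtx m ⊕ Vtx m ≃ Fin M)
    {P : Set (Option (Fin M × Fin M) → ℝ)} (hP : ∃ S, S.Finite ∧ P = convexHull ℝ S)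
    (hsub : P ⊆ Ppoly M M (jobSize ∘ e.symm))
    (hopt : ∀ σ, makespan (jobSize ∘ e.symm) σ = 2 → schedulePoint σ 2 ∈ P) :
    Real.exp ((1 / 41) ^ 2 * (m + 1) / 2) ≤ 42 * ((xc P + 1) * (4 * m + 5)) := by
  classical
  have hEF : IsEF P (xc P) := by
    obtain ⟨S, hS, rfl⟩ := hP
    exact Nat.sInf_mem (exists_isEF_convexHull hS)
  set key : Vtx m → ℕ := fun v => Fintype.equivFin (Vtx m) v
  have hkey : Function.Injective key := Fin.val_injective.comp (Equiv.injective _)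
  obtain ⟨f, g, hf, hg, hfg⟩ := hEF.exists_nonneg_factorization
    (α := {X : Vtx m → Bool // Odd (Finset.univ.filter fun v => X v = true).card})
    (β := {π : Vtx m → Vtx m // Function.Involutive π})
    (fun X => separator e X.1)
    (fun π => schedulePoint (transport e (matchingSchedule key π.1)) 2)
    (fun π => hopt _ (makespan_transport_matchingSchedule e key π.2))
    (fun X z hz => separator_nonneg e X.2 (hsub hz))
  have := exp_le_of_nonneg_factorization
    (fun r X => if hX : Odd (Finset.univ.filter fun v => X v = true).card then f r ⟨X, hX⟩ else 0)
    (fun r π => if hπ : Function.Involutive π then g r ⟨π, hπ⟩ else 0)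
    (fun r X hX => by simp only [dif_pos hX, hf])
    (fun r π hπ => by simp only [dif_pos hπ, hg])
    (fun X π hX hπ => by
      simp only [dif_pos hX, dif_pos hπ]
      rw [← hfg ⟨X, hX⟩ ⟨π, hπ⟩]
      exact (separator_matchingSchedule e X hkey hπ).symm)
  simpa using this

theorem two_pow_le_of_exp_le {n : ℕ} (hn : 2 ≤ n) {k : ℕ}
    (h : Real.exp ((1 / 41) ^ 2 * ((70602 * n : ℕ) + 1) / 2) ≤
      42 * ((k + 1) * (4 * (70602 * n : ℕ) + 5))) : (2 : ℝ) ^ n ≤ k := by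
  by_contra! hk
  have hk' : (k + 1 : ℝ) ≤ 2 ^ n := by
    have : k < 2 ^ n := by exact_mod_cast hk
    exact_mod_cast this
  have hn' : (2 : ℝ) ≤ n := by exact_mod_cast hn
  have h1 : (2 : ℝ) ^ (21 * n) ≤ Real.exp ((1 / 41) ^ 2 * ((70602 * n : ℕ) + 1) / 2) := by
    calc (2 : ℝ) ^ (21 * n) ≤ Real.exp 1 ^ (21 * n) := by
          gcongr
          linarith [Real.add_one_le_exp (1 : ℝ)]
      _ = Real.exp (21 * n) := by rw [← Real.exp_nat_mul]; push_cast; ring_nf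
      _ ≤ _ := by
          refine Real.exp_le_exp.2 ?_
          push_cast
          linarith
  have h2 : 42 * ((k + 1) * (4 * (70602 * n : ℕ) + 5)) ≤ 2 ^ n * (11861346 * n : ℝ) := by
    have : (4 * (70602 * n : ℕ) + 5 : ℝ) ≤ 282413 * n := by push_cast; linarith
    calc 42 * ((k + 1) * (4 * (70602 * n : ℕ) + 5)) ≤ 42 * ((2 : ℝ) ^ n * (282413 * n)) := by gcongr
      _ = _ := by ring
  have h3 : (n : ℝ) < 2 ^ n := by exact_mod_cast Nat.lt_two_pow_self
  have h4 : (11861346 : ℝ) < 2 ^ (19 * n) := by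
    calc (11861346 : ℝ) < 2 ^ (19 * 2) := by norm_num
      _ ≤ _ := pow_le_pow_right₀ one_le_two (by omega)
  have h5 : (2 : ℝ) ^ n * (11861346 * n) < 2 ^ (21 * n) := by
    calc (2 : ℝ) ^ n * (11861346 * n) < 2 ^ n * (2 ^ (19 * n) * 2 ^ n) := by
          gcongr
      _ = _ := by rw [← pow_add, ← pow_add]; congr 1; ring
  linarith

/-- There are instances of `P||C_max` with `O(n)` jobs and machines, processing times in
`{1,2}` and optimal makespan `2`, such that every polytope contained in `P(J,M)` that
contains `(x^σ, 2)` for every optimal schedule `σ` and whose extreme points are all of the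
form `(x^σ, T)` with `T ∈ ℕ`, `T ≥ makespan(σ)`, has extension complexity at least
`2^(c·n/log n)`. -/
theorem makespan_large_xc_subpolytopes :
    ∃ c C : ℝ, 0 < c ∧ 1 ≤ C ∧ ∀ n : ℕ, 2 ≤ n →
      ∃ (nJ m : ℕ) (p : Fin nJ → ℕ),
        (nJ : ℝ) ≤ C * n ∧ (m : ℝ) ≤ C * n ∧
        (∀ j, p j = 1 ∨ p j = 2) ∧
        optMakespan nJ m p = 2 ∧
        ∀ Pbar : Set (Option (Fin m × Fin nJ) → ℝ),
          (∃ S : Set (Option (Fin m × Fin nJ) → ℝ), S.Finite ∧ Pbar = convexHull ℝ S) →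
          Pbar ⊆ Ppoly nJ m p →
          (∀ σ : Fin nJ → Fin m, makespan p σ = 2 →
            (fun q => Option.elim q (2 : ℝ) (fun ij => assignVec σ ij)) ∈ Pbar) →
          (∀ z ∈ Set.extremePoints ℝ Pbar, ∃ (σ : Fin nJ → Fin m) (t : ℕ),
            makespan p σ ≤ t ∧
            z = fun q => Option.elim q (t : ℝ) (fun ij => assignVec σ ij)) →
          (2 : ℝ) ^ (c * n / Real.log n) ≤ (xc Pbar : ℝ) := by
  refine ⟨Real.log 2, 600000, Real.log_pos one_lt_two, by norm_num, fun n hn => ?_⟩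
  have hn' : (2 : ℝ) ≤ n := by exact_mod_cast hn
  set m := 70602 * n with hm
  set M := Fintype.card (Vtx m ⊕ Vtx m) with hM
  have hcard : (M : ℝ) ≤ 600000 * n := by
    have : M = 2 * (4 * m + 5) := by
      simp [hM, Fintype.card_sum, Fintype.card_prod]; ring
    rw [this, hm]
    push_cast
    linarith
  set e : Vtx m ⊕ Vtx m ≃ Fin M := Fintype.equivFin _
  refine ⟨M, M, jobSize ∘ e.symm, hcard, hcard, fun j => ?_, optMakespan_eq_two e,
    fun P hP hsub hopt _ => ?_⟩
  · rcases h : e.symm j with v | v <;> simp [jobSize, h]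
  · have h1 := two_pow_le_of_exp_le hn (exp_le_xc e hP hsub hopt)
    refine le_trans ?_ h1
    rw [← Real.rpow_natCast]
    refine Real.rpow_le_rpow_of_exponent_le one_le_two ?_
    have hlog : Real.log 2 ≤ Real.log n := Real.log_le_log two_pos hn'
    have hlog2 : 0 < Real.log 2 := Real.log_pos one_lt_two
    rw [div_le_iff₀ (hlog2.trans_le hlog), mul_comm]
    gcongr
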